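/- arXiv:1209.3366 — 2 statements merged into one kernel-verified Lean document; each statement's English description precedes it below -/
import Mathlib

section
/- Let s₀, s₁, s₂ be natural numbers satisfying s₀ + s₁ + s₂ ≤ 4·min(s₀, s₁, s₂), and extend them to a function s : ℤ/12ℤ → ℕ by s_t = s_{t mod 3}. Then there exists a function l : ℤ/12ℤ → ℕ such that for every t ∈ ℤ/12ℤ one has s_t = l_{t−3} + l_{t−2} + l_{t−1} + l_t (indices taken modulo 12). -/
/-- If `s₀ + s₁ + s₂ ≤ 4 · min(s₀, s₁, s₂)` and `s : ℤ/12ℤ → ℕ` is the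
period-3 extension of `(s₀, s₁, s₂)`, then there is `l : ℤ/12ℤ → ℕ` with
`s t = l (t-3) + l (t-2) + l (t-1) + l t` for all `t`. -/
theorem stmt_0 (s₀ s₁ s₂ : ℕ)
    (h : s₀ + s₁ + s₂ ≤ 4 * min s₀ (min s₁ s₂))
    (s : ZMod 12 → ℕ)
    (hs : ∀ t : ZMod 12, s t = ![s₀, s₁, s₂] ⟨t.val % 3, by omega⟩) :
    ∃ l : ZMod 12 → ℕ,
      ∀ t : ZMod 12, s t = l (t - 3) + l (t - 2) + l (t - 1) + l t := by
  -- `l t = s t - b (t mod 4)` with `b = (m, m, m, S - 3 m)`.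
  obtain ⟨m, hm⟩ : ∃ m, m = min s₀ (min s₁ s₂) := ⟨_, rfl⟩
  rw [← hm] at h
  have h0 : m ≤ s₀ := by omega
  have h1 : m ≤ s₁ := by omega
  have h2 : m ≤ s₂ := by omega
  clear hm
  refine ⟨fun t => ![s₀, s₁, s₂] ⟨t.val % 3, by omega⟩ -
    ![m, m, m, s₀ + s₁ + s₂ - 3 * m] ⟨t.val % 4, by omega⟩, fun t => ?_⟩
  rw [hs]
  change Fin 12 at t
  fin_cases t
  · change s₀ = (s₀ - m) + (s₁ - m) + (s₂ - (s₀ + s₁ + s₂ - 3 * m)) + (s₀ - m)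
    omega
  · change s₁ = (s₁ - m) + (s₂ - (s₀ + s₁ + s₂ - 3 * m)) + (s₀ - m) + (s₁ - m)
    omega
  · change s₂ = (s₂ - (s₀ + s₁ + s₂ - 3 * m)) + (s₀ - m) + (s₁ - m) + (s₂ - m)
    omega
  · change s₀ = (s₀ - m) + (s₁ - m) + (s₂ - m) + (s₀ - (s₀ + s₁ + s₂ - 3 * m))
    omega
  · change s₁ = (s₁ - m) + (s₂ - m) + (s₀ - (s₀ + s₁ + s₂ - 3 * m)) + (s₁ - m)
    omega
  · change s₂ = (s₂ - m) + (s₀ - (s₀ + s₁ + s₂ - 3 * m)) + (s₁ - m) + (s₂ - m)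
    omega
  · change s₀ = (s₀ - (s₀ + s₁ + s₂ - 3 * m)) + (s₁ - m) + (s₂ - m) + (s₀ - m)
    omega
  · change s₁ = (s₁ - m) + (s₂ - m) + (s₀ - m) + (s₁ - (s₀ + s₁ + s₂ - 3 * m))
    omega
  · change s₂ = (s₂ - m) + (s₀ - m) + (s₁ - (s₀ + s₁ + s₂ - 3 * m)) + (s₂ - m)
    omega
  · change s₀ = (s₀ - m) + (s₁ - (s₀ + s₁ + s₂ - 3 * m)) + (s₂ - m) + (s₀ - m)
    omega
  · change s₁ = (s₁ - (s₀ + s₁ + s₂ - 3 * m)) + (s₂ - m) + (s₀ - m) + (s₁ - m)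
    omega
  · change s₂ = (s₂ - m) + (s₀ - m) + (s₁ - m) + (s₂ - (s₀ + s₁ + s₂ - 3 * m))
    omega
end

section
/- Let N ≥ 2 and K ≥ 2 be integers and let n be an integer with 2 ≤ n ≤ ⌊N/2⌋. Say a subset S of ℤ/Nℤ is contained in an arc of length m if there exists c ∈ ℤ/Nℤ with S ⊆ {c, c+1, …, c+m−1}. Then the number of tuples (n₂,…,n_K) ∈ (ℤ/Nℤ)^{K−1} for which the minimal m such that {0, n₂, …, n_K} is contained in an arc of length m equals exactly n, is 2·(n^{K−1} − (n−1)^{K−1}) + (n−2)·(n^{K−1} − 2(n−1)^{K−1} + (n−2)^{K−1}). -/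
open Classical in
/-- tuples such that `0` and all entries lie in the arc of length `m` starting at `c` -/
noncomputable def arcT (N k : ℕ) [NeZero N] (m : ℕ) (c : ZMod N) : Finset (Fin k → ZMod N) :=
  Finset.univ.filter (fun v => ∀ x ∈ insert (0 : ZMod N) (Set.range v), (x - c).val < m)

theorem arc_mem_iff (N : ℕ) [NeZero N] (m : ℕ) (hm : m ≤ N) (c x : ZMod N) :
    (∃ i : ℕ, i < m ∧ x = c + (i : ZMod N)) ↔ (x - c).val < m := by
  constructor
  · rintro ⟨i, hi, rfl⟩
    rw [add_sub_cancel_left, ZMod.val_cast_of_lt (by omega)]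
    exact hi
  · intro h
    exact ⟨(x - c).val, h, by simp⟩

theorem val_shift (N : ℕ) [NeZero N] (hN : 2 ≤ N) (c x : ZMod N) :
    (x = c ∧ (x - c).val = 0 ∧ (x - (c + 1)).val = N - 1) ∨
    (x ≠ c ∧ (x - c).val = (x - (c + 1)).val + 1) := by
  haveI : Fact (1 < N) := ⟨hN⟩
  by_cases h : x = c
  · left
    subst h
    refine ⟨rfl, by simp, ?_⟩
    have : x - (x + 1) = -1 := by ring
    rw [this, ZMod.neg_val, ZMod.val_one]
    simp
  · right
    refine ⟨h, ?_⟩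
    have h0 : x - c ≠ 0 := sub_ne_zero.mpr h
    have h1 : (x - c).val ≠ 0 := by rwa [Ne, ZMod.val_eq_zero]
    have : x - (c + 1) = (x - c) - 1 := by ring
    have h2 : (x - c - 1).val = (x - c).val - (1 : ZMod N).val :=
      ZMod.val_sub (by rw [ZMod.val_one]; omega)
    rw [this, h2, ZMod.val_one]
    omega

theorem card_val_lt (N : ℕ) [NeZero N] (m : ℕ) (hm : m ≤ N) (c : ZMod N) :
    (Finset.univ.filter (fun x : ZMod N => (x - c).val < m)).card = m := by
  have : Finset.univ.filter (fun x : ZMod N => (x - c).val < m)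
      = (Finset.range m).image (fun i : ℕ => c + (i : ZMod N)) := by
    ext x
    simp only [Finset.mem_filter, Finset.mem_univ, true_and, Finset.mem_image, Finset.mem_range]
    rw [← arc_mem_iff N m hm]
    simp only [eq_comm]
  rw [this, Finset.card_image_of_injOn, Finset.card_range]
  intro i hi j hj hij
  simp only [Finset.coe_range, Set.mem_Iio] at hi hj
  have := congrArg ZMod.val (add_left_cancel hij)
  rwa [ZMod.val_cast_of_lt (by omega), ZMod.val_cast_of_lt (by omega)] at this

theorem arcT_card (N k : ℕ) [NeZero N] (m : ℕ) (hm : m ≤ N) (c : ZMod N) :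
    (arcT N k m c).card = if (0 - c).val < m then m ^ k else 0 := by
  split_ifs with h
  · have : arcT N k m c = Fintype.piFinset
        (fun _ : Fin k => Finset.univ.filter (fun x : ZMod N => (x - c).val < m)) := by
      ext v
      simp only [arcT, Finset.mem_filter, Finset.mem_univ, true_and, Fintype.mem_piFinset,
        Set.mem_insert_iff, Set.mem_range, forall_eq_or_imp, forall_exists_index,
        forall_apply_eq_imp_iff, h]
    rw [this, Fintype.card_piFinset]
    simp [card_val_lt N m hm c]
  · rw [Finset.card_eq_zero]
    ext v
    simp only [arcT, Finset.mem_filter, Finset.mem_univ, true_and, Finset.notMem_empty, iff_false]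
    intro h'
    exact h (h' 0 (Set.mem_insert _ _))

theorem sum_arcT_card (N k : ℕ) [NeZero N] (m : ℕ) (hm : m ≤ N) :
    ∑ c : ZMod N, (arcT N k m c).card = m ^ (k + 1) := by
  simp_rw [arcT_card N k m hm]
  rw [← Equiv.sum_comp (Equiv.neg (ZMod N)), Finset.sum_ite]
  have := card_val_lt N m hm 0
  simp only [sub_zero] at this
  simp [this, pow_succ, mul_comm]

theorem arcT_sub (N k : ℕ) [NeZero N] (hN : 2 ≤ N) (m : ℕ) (hm : m + 1 ≤ N) (c : ZMod N) :
    arcT N k m (c + 1) ⊆ arcT N k (m + 1) c := by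
  intro v hv
  simp only [arcT, Finset.mem_filter, Finset.mem_univ, true_and] at hv ⊢
  intro x hx
  have := hv x hx
  have := val_shift N hN c x
  omega

theorem arcT_start (N k : ℕ) [NeZero N] (hN : 2 ≤ N) (m : ℕ) (c : ZMod N)
    (v : Fin k → ZMod N) (h : v ∈ arcT N k (m + 1) c \ arcT N k m (c + 1)) :
    c ∈ insert (0 : ZMod N) (Set.range v) := by
  simp only [arcT, Finset.mem_sdiff, Finset.mem_filter, Finset.mem_univ, true_and] at h
  obtain ⟨h1, h2⟩ := h
  by_contra hc
  apply h2
  intro x hx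
  have := h1 x hx
  have hne : x ≠ c := by rintro rfl; exact hc hx
  rcases val_shift N hN c x with h | h
  · exact absurd h.1 hne
  · omega

theorem arcT_exists (N k : ℕ) [NeZero N] (hN : 2 ≤ N) (m : ℕ) (hm : m + 1 ≤ N)
    (v : Fin k → ZMod N) (j : ℕ) : ∀ c : ZMod N, j ≤ m + 1 → v ∈ arcT N k j c →
    ∃ c', v ∈ arcT N k (m + 1) c' \ arcT N k m (c' + 1) := by
  induction j with
  | zero =>
    intro c _ h
    simp only [arcT, Finset.mem_filter, Finset.mem_univ, true_and] at h
    exact absurd (h 0 (Set.mem_insert _ _)) (by omega)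
  | succ j ih =>
    intro c hj h
    by_cases h2 : v ∈ arcT N k m (c + 1)
    · apply ih (c + 1) (by omega)
      simp only [arcT, Finset.mem_filter, Finset.mem_univ, true_and] at h h2 ⊢
      intro x hx
      have := h x hx
      have := h2 x hx
      have := val_shift N hN c x
      omega
    · refine ⟨c, Finset.mem_sdiff.mpr ⟨?_, h2⟩⟩
      simp only [arcT, Finset.mem_filter, Finset.mem_univ, true_and] at h ⊢
      intro x hx
      have := h x hx
      omega

open Classical in
theorem arc_count (N k : ℕ) [NeZero N] (hN : 2 ≤ N) (m : ℕ) (hm : 2 * (m + 1) ≤ N) :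
    (Finset.univ.biUnion (fun c : ZMod N => arcT N k (m + 1) c)).card + m ^ (k + 1)
      = (m + 1) ^ (k + 1) := by
  have hU : Finset.univ.biUnion (fun c : ZMod N => arcT N k (m + 1) c)
      = Finset.univ.biUnion (fun c : ZMod N => arcT N k (m + 1) c \ arcT N k m (c + 1)) := by
    ext v
    simp only [Finset.mem_biUnion, Finset.mem_univ, true_and]
    constructor
    · rintro ⟨c, hc⟩
      exact arcT_exists N k hN m (by omega) v (m + 1) c le_rfl hc
    · rintro ⟨c, hc⟩
      exact ⟨c, (Finset.mem_sdiff.mp hc).1⟩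
  rw [hU, Finset.card_biUnion]
  · rw [← sum_arcT_card N k m (by omega), ← sum_arcT_card N k (m + 1) (by omega),
      ← Equiv.sum_comp (Equiv.addRight (1 : ZMod N)) (fun c => (arcT N k m c).card),
      ← Finset.sum_add_distrib]
    apply Finset.sum_congr rfl
    intro c _
    exact Finset.card_sdiff_add_card_eq_card (arcT_sub N k hN m (by omega) c)
  · intro c _ d _ hcd
    refine Finset.disjoint_left.mpr ?_
    intro v hc hd
    have h1 := arcT_start N k hN m c v hc
    have h2 := arcT_start N k hN m d v hd
    simp only [arcT, Finset.mem_sdiff, Finset.mem_filter, Finset.mem_univ, true_and] at hc hd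
    have h3 := hc.1 d h2
    have h4 := hd.1 c h1
    have h5 : c - d = -(d - c) := by ring
    rw [h5, ZMod.neg_val, if_neg (sub_ne_zero.mpr (Ne.symm hcd))] at h4
    omega


/-- For `2 ≤ n ≤ ⌊N/2⌋`, the number of tuples
`(n₂, …, n_K) ∈ (ℤ/Nℤ)^{K-1}` for which the minimal length `m` of an arc containing
`{0, n₂, …, n_K}` equals exactly `n` is
`2(n^{K-1} - (n-1)^{K-1}) + (n-2)(n^{K-1} - 2(n-1)^{K-1} + (n-2)^{K-1})`. -/
theorem stmt_10 (N K n : ℕ) (hN : 2 ≤ N) (hK : 2 ≤ K) (hn2 : 2 ≤ n) (hn : n ≤ N / 2) :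
    ({v : Fin (K - 1) → ZMod N |
        sInf {m : ℕ | ∃ c : ZMod N, ∀ x ∈ insert (0 : ZMod N) (Set.range v),
          ∃ i : ℕ, i < m ∧ x = c + (i : ZMod N)} = n}.ncard : ℤ)
      = 2 * ((n : ℤ) ^ (K - 1) - ((n : ℤ) - 1) ^ (K - 1))
        + ((n : ℤ) - 2) *
            ((n : ℤ) ^ (K - 1) - 2 * ((n : ℤ) - 1) ^ (K - 1) + ((n : ℤ) - 2) ^ (K - 1)) := by
  haveI : NeZero N := ⟨by omega⟩
  classical
  obtain ⟨p, rfl⟩ : ∃ p, n = p + 2 := ⟨n - 2, by omega⟩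
  generalize K - 1 = k
  have hmono : ∀ c : ZMod N, arcT N k (p + 1) c ⊆ arcT N k (p + 2) c := by
    intro c v hv
    simp only [arcT, Finset.mem_filter, Finset.mem_univ, true_and] at hv ⊢
    intro x hx
    have := hv x hx
    omega
  have hmem : ∀ (v : Fin k → ZMod N) (m : ℕ), m ≤ N →
      ((m ∈ {m : ℕ | ∃ c : ZMod N, ∀ x ∈ insert (0 : ZMod N) (Set.range v),
          ∃ i : ℕ, i < m ∧ x = c + (i : ZMod N)}) ↔
        v ∈ Finset.univ.biUnion (fun c : ZMod N => arcT N k m c)) := by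
    intro v m hm
    simp only [Set.mem_setOf_eq, Finset.mem_biUnion, Finset.mem_univ, true_and, arcT,
      Finset.mem_filter, arc_mem_iff N m hm]
  have hset : {v : Fin k → ZMod N |
        sInf {m : ℕ | ∃ c : ZMod N, ∀ x ∈ insert (0 : ZMod N) (Set.range v),
          ∃ i : ℕ, i < m ∧ x = c + (i : ZMod N)} = p + 2}
      = ((Finset.univ.biUnion (fun c : ZMod N => arcT N k (p + 2) c) \
          Finset.univ.biUnion (fun c : ZMod N => arcT N k (p + 1) c) :
            Finset (Fin k → ZMod N)) : Set (Fin k → ZMod N)) := by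
    ext v
    rw [Finset.mem_coe, Finset.mem_sdiff, ← hmem v (p + 2) (by omega),
      ← hmem v (p + 1) (by omega), Set.mem_setOf_eq]
    rw [Nat.sInf_upward_closed_eq_succ_iff]
    rintro a b hab ⟨c, hc⟩
    refine ⟨c, fun x hx => ?_⟩
    obtain ⟨i, hi, h⟩ := hc x hx
    exact ⟨i, by omega, h⟩
  rw [hset, Set.ncard_coe_finset]
  have hs : Finset.univ.biUnion (fun c : ZMod N => arcT N k (p + 1) c) ⊆
      Finset.univ.biUnion (fun c : ZMod N => arcT N k (p + 2) c) :=
    Finset.biUnion_mono (fun c _ => hmono c)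
  have e1 := Finset.card_sdiff_add_card_eq_card hs
  have e2 := arc_count N k hN p (by omega)
  have e3 := arc_count N k hN (p + 1) (by omega)
  zify at e1 e2 e3
  push_cast
  have a1 : (p : ℤ) + 2 - 1 = p + 1 := by ring
  have a2 : (p : ℤ) + 2 - 2 = p := by ring
  have a3 : (p : ℤ) + 1 + 1 = p + 2 := by ring
  rw [a1, a2]
  rw [a3] at e3
  simp only [pow_succ] at e2 e3
  linear_combination e1 + e3 - e2
end
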